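/- Suppose at a point p the fiberwise quadratic forms satisfy Σ_{i=1}^{2n} a_i · h_{β_i}(y) = h_{α_1}(y) for all y in the fiber, for some constants a_i ∈ ℝ, where h_γ(y) = Σ_{j=1}^{2n}(y_γ^j)² in the flat coordinates of chart U_γ. Then the local index ν_p defined by the limit (0.1) vanishes: ν_p = 0. -/

import Mathlib

open Filter MeasureTheory Real

/-!
Fix `T > 0` and a base point `x`. By the relation between the quadratic forms, the exponent
restricts to the fibre as `-Q` with `Q = ∑ i, w i * h i` and `w i = ρ i x * T ^ β i + T ^ α * a i`.
Since `Q` dominates a positive multiple of `‖y‖ ^ 2`, some `w k` is nonzero, and replacing `dh k` by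
`dQ` multiplies `dh 1 ∧ ⋯ ∧ dh 2n` by `w k`. Hence `w k` times the fibre form is
`dh 1 ∧ ⋯ ∧ exp (-Q) dQ ∧ ⋯ ∧ dh 2n`, which is exact with rapidly decaying primitive. In coordinates
this is an integration by parts of `exp (-Q)` against the `k`-th column of the adjugate Jacobian
matrix, which is divergence-free. So the integral vanishes already for every `T > 0`.
-/

section Determinant

variable {ι R : Type*} [Fintype ι] [DecidableEq ι] [CommRing R]

lemma det_updateRow_eq_sum_mul_adjugate (A : Matrix ι ι R) (k : ι) (v : ι → R) :
    (A.updateRow k v).det = ∑ j, v j * A.adjugate j k := by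
  rw [← Matrix.cramer_transpose_apply, Matrix.cramer_eq_adjugate_mulVec,
    ← Matrix.adjugate_transpose]
  simp only [Matrix.mulVec, dotProduct, Matrix.transpose_apply, mul_comm]

lemma det_updateRow_updateRow_swap (A : Matrix ι ι R) {i k : ι} (hik : i ≠ k) (u v : ι → R) :
    ((A.updateRow k u).updateRow i v).det = -((A.updateRow k v).updateRow i u).det := by
  have hswap : ((A.updateRow k v).updateRow i u).submatrix (Equiv.swap i k) id =
      (A.updateRow k u).updateRow i v := by
    ext a b
    simp only [Matrix.submatrix_apply, id, Matrix.updateRow_apply, Equiv.swap_apply_def]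
    grind
  rw [← hswap, Matrix.det_permute, Equiv.Perm.sign_swap hik]
  simp

lemma det_updateRow_updateRow_self (A : Matrix ι ι R) {i k : ι} (hik : i ≠ k) (u : ι → R) :
    ((A.updateRow k u).updateRow i u).det = 0 :=
  Matrix.det_zero_of_row_eq hik (by simp [Matrix.updateRow_ne hik.symm])

lemma sum_det_updateRow_single_updateRow_eq_zero (A : Matrix ι ι R) {i k : ι} (hik : i ≠ k)
    {S : Matrix ι ι R} (hS : S.IsSymm) :
    ∑ j, ((A.updateRow k (Pi.single j 1)).updateRow i (S j)).det = 0 := by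
  have hexpand (j : ι) : ((A.updateRow k (Pi.single j 1)).updateRow i (S j)).det =
      ∑ l, S j l * ((A.updateRow k (Pi.single j 1)).updateRow i (Pi.single l 1)).det := by
    simp only [det_updateRow_eq_sum_mul_adjugate _ i (S j), Matrix.adjugate_apply]
  simp only [hexpand, ← Finset.sum_product']
  refine Finset.sum_involution (fun p _ => p.swap) (fun p _ => ?_) (fun p _ hp hpp => hp ?_)
    (fun _ _ => by simp) (fun _ _ => by simp)
  · rw [Prod.fst_swap, Prod.snd_swap, det_updateRow_updateRow_swap A hik (Pi.single p.2 1),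
      hS.apply]
    ring
  · rw [show p.1 = p.2 from congrArg Prod.snd hpp, det_updateRow_updateRow_self A hik, mul_zero]

end Determinant

section MatrixDerivative

variable {ι 𝕜 E : Type*} [Fintype ι] [DecidableEq ι] [NontriviallyNormedField 𝕜]
  [NormedAddCommGroup E] [NormedSpace 𝕜 E]

lemma fderiv_det_apply {A : E → Matrix ι ι 𝕜} {x : E}
    (hA : ∀ i, DifferentiableAt 𝕜 (fun y => A y i) x) (v : E) :
    fderiv 𝕜 (fun y => (A y).det) x v =
      ∑ i, ((A x).updateRow i (fderiv 𝕜 (fun y => A y i) x v)).det := by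
  let detL : ContinuousMultilinearMap 𝕜 (fun _ : ι => ι → 𝕜) 𝕜 :=
    ⟨Matrix.detRowAlternating.toMultilinearMap, continuous_id.matrix_det⟩
  have hdet := HasFDerivAt.multilinear_comp detL fun i => (hA i).hasFDerivAt
  refine (DFunLike.congr_fun hdet.fderiv v).trans ?_
  simp only [sum_apply, ContinuousLinearMap.comp_apply]
  rfl

lemma fderiv_adjugate_apply {A : E → Matrix ι ι 𝕜} {x : E}
    (hA : ∀ i, DifferentiableAt 𝕜 (fun y => A y i) x) (v : E) (j k : ι) :
    fderiv 𝕜 (fun y => (A y).adjugate j k) x v = ∑ i ∈ Finset.univ.erase k,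
      (((A x).updateRow k (Pi.single j 1)).updateRow i (fderiv 𝕜 (fun y => A y i) x v)).det := by
  have hrow_self : (fun y => (A y).updateRow k (Pi.single j 1) k) = fun _ => Pi.single j 1 :=
    funext fun y => Matrix.updateRow_self
  have hrow_ne {i : ι} (hi : i ≠ k) :
      (fun y => (A y).updateRow k (Pi.single j 1) i) = fun y => A y i :=
    funext fun y => Matrix.updateRow_ne hi
  have hdiff (i : ι) : DifferentiableAt 𝕜 (fun y => (A y).updateRow k (Pi.single j 1) i) x := by
    rcases eq_or_ne i k with rfl | hi
    · simp only [hrow_self, differentiableAt_const]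
    · simpa only [hrow_ne hi] using hA i
  have hconst : (((A x).updateRow k (Pi.single j 1)).updateRow k
      (fderiv 𝕜 (fun y => (A y).updateRow k (Pi.single j 1) k) x v)).det = 0 := by
    refine Matrix.det_eq_zero_of_row_eq_zero k fun l => ?_
    simp
  simp only [Matrix.adjugate_apply]
  rw [fderiv_det_apply hdiff, ← Finset.add_sum_erase _ _ (Finset.mem_univ k), hconst, zero_add]
  exact Finset.sum_congr rfl fun i hi => by rw [hrow_ne (Finset.ne_of_mem_erase hi)]

end MatrixDerivative

section Piola

variable {ι : Type*} [Fintype ι] [DecidableEq ι]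

/-- The Jacobian matrix of the map with components `f i`, whose `i`-th row is the differential
`df i` in the standard coordinates. -/
noncomputable def jacobian (f : ι → EuclideanSpace ℝ ι → ℝ) (x : EuclideanSpace ℝ ι) :
    Matrix ι ι ℝ :=
  Matrix.of fun i j => fderiv ℝ (f i) x (EuclideanSpace.single j 1)

lemma hasFDerivAt_jacobian_row {f : ι → EuclideanSpace ℝ ι → ℝ} {i : ι} {x : EuclideanSpace ℝ ι}
    (hf : ContDiffAt ℝ 2 (f i) x) :
    HasFDerivAt (fun y => jacobian f y i) (ContinuousLinearMap.pi fun l =>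
      (fderiv ℝ (fderiv ℝ (f i)) x).flip (EuclideanSpace.single l 1)) x := by
  have hdf : HasFDerivAt (fderiv ℝ (f i)) (fderiv ℝ (fderiv ℝ (f i)) x) x :=
    ((hf.fderiv_right (m := 1) le_rfl).differentiableAt one_ne_zero).hasFDerivAt
  refine hasFDerivAt_pi.2 fun l => ?_
  exact (hdf.clm_apply (hasFDerivAt_const (EuclideanSpace.single l (1 : ℝ)) x)).congr_fderiv
    (by simp)

/-- The **Piola identity**. Row by row, the divergence pairs the symmetric Hessian of `f i` with a
form alternating in the rows `i` and `k`. -/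
lemma sum_fderiv_adjugate_jacobian_eq_zero {f : ι → EuclideanSpace ℝ ι → ℝ}
    {x : EuclideanSpace ℝ ι} (hf : ∀ i, ContDiffAt ℝ 2 (f i) x) (k : ι) :
    ∑ j, fderiv ℝ (fun y => (jacobian f y).adjugate j k) x (EuclideanSpace.single j 1) = 0 := by
  have hrow (i : ι) := hasFDerivAt_jacobian_row (hf i)
  simp only [fderiv_adjugate_apply fun i => (hrow i).differentiableAt]
  rw [Finset.sum_comm]
  refine Finset.sum_eq_zero fun i hi => ?_
  have hsymm : (Matrix.of fun j => fderiv ℝ (fun y => jacobian f y i) x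
      (EuclideanSpace.single j 1)).IsSymm := by
    refine Matrix.IsSymm.ext fun j l => ?_
    simpa [(hrow i).fderiv] using ((hf i).isSymmSndFDerivAt (by simp)).eq _ _
  exact sum_det_updateRow_single_updateRow_eq_zero _ (Finset.ne_of_mem_erase hi) hsymm

end Piola

section GaussianDecay

variable {E : Type*} [NormedAddCommGroup E] [NormedSpace ℝ E]

lemma exists_one_add_pow_mul_exp_neg_mul_sq_le {c : ℝ} (hc : 0 < c) (m : ℕ) :
    ∃ C, ∀ t : ℝ, 0 ≤ t → (1 + t) ^ m * exp (-(c * t ^ 2)) ≤ C := by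
  refine ⟨m.factorial * exp (1 + 1 / (4 * c)), fun t ht => ?_⟩
  have hpow : (1 + t) ^ m ≤ m.factorial * exp (1 + t) := by
    have := pow_div_factorial_le_exp (x := 1 + t) (by positivity) m
    rwa [div_le_iff₀' (by positivity)] at this
  have hsq : t ≤ c * t ^ 2 + 1 / (4 * c) := by
    have hsq_eq : c * t ^ 2 + 1 / (4 * c) - t = (2 * c * t - 1) ^ 2 / (4 * c) := by
      field_simp; ring
    have : 0 ≤ (2 * c * t - 1) ^ 2 / (4 * c) := by positivity
    linarith
  calc (1 + t) ^ m * exp (-(c * t ^ 2))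
      ≤ m.factorial * exp (1 + t) * exp (-(c * t ^ 2)) := by gcongr
    _ = m.factorial * exp (1 + t - c * t ^ 2) := by rw [mul_assoc, ← exp_add, sub_eq_add_neg]
    _ ≤ m.factorial * exp (1 + 1 / (4 * c)) := by gcongr; linarith

lemma hasTemperateGrowth_fderiv {F : Type*} [NormedAddCommGroup F] [NormedSpace ℝ F] {f : E → F}
    (hf : f.HasTemperateGrowth) : (fderiv ℝ f).HasTemperateGrowth :=
  ⟨hf.1.fderiv_right (by simp), fun n => by
    simpa only [norm_iteratedFDeriv_fderiv] using hf.2 (n + 1)⟩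

lemma hasTemperateGrowth_fderiv_apply {F : Type*} [NormedAddCommGroup F] [NormedSpace ℝ F]
    {f : E → F} (hf : f.HasTemperateGrowth) (v : E) :
    (fun x => fderiv ℝ f x v).HasTemperateGrowth :=
  (ContinuousLinearMap.apply ℝ F v).hasTemperateGrowth.comp (hasTemperateGrowth_fderiv hf)

lemma hasTemperateGrowth_prod {ι R : Type*} [NormedCommRing R] [NormedAlgebra ℝ R] (s : Finset ι)
    {f : ι → E → R}
    (hf : ∀ i ∈ s, (f i).HasTemperateGrowth) : (fun x => ∏ i ∈ s, f i x).HasTemperateGrowth := by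
  simp only [← Finset.prod_apply]
  exact Finset.prod_induction _ _ (fun _ _ => .mul) (.const 1) hf

lemma hasTemperateGrowth_det {ι R : Type*} [Fintype ι] [DecidableEq ι] [NormedCommRing R]
    [NormedAlgebra ℝ R] {A : E → Matrix ι ι R}
    (hA : ∀ i j, (fun x => A x i j).HasTemperateGrowth) :
    (fun x => (A x).det).HasTemperateGrowth := by
  simp only [Matrix.det_apply']
  exact .sum fun σ _ => (Function.HasTemperateGrowth.const _).fun_mul
    (hasTemperateGrowth_prod _ fun i _ => hA (σ i) i)

lemma hasTemperateGrowth_adjugate {ι R : Type*} [Fintype ι] [DecidableEq ι] [NormedCommRing R]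
    [NormedAlgebra ℝ R] {A : E → Matrix ι ι R}
    (hA : ∀ i j, (fun x => A x i j).HasTemperateGrowth) (j k : ι) :
    (fun x => (A x).adjugate j k).HasTemperateGrowth := by
  simp only [Matrix.adjugate_apply]
  refine hasTemperateGrowth_det fun i l => ?_
  rcases eq_or_ne i k with rfl | hi
  · simp
  · simpa only [Matrix.updateRow_ne hi] using hA i l

variable [MeasurableSpace E] [BorelSpace E]

lemma integrable_mul_exp_neg {μ : Measure E} [μ.HasTemperateGrowth] {f Q : E → ℝ}
    (hf : f.HasTemperateGrowth) (hQ : Continuous Q) {c : ℝ} (hc : 0 < c)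
    (hcQ : ∀ x, c * ‖x‖ ^ 2 ≤ Q x) : Integrable (fun x => f x * exp (-Q x)) μ := by
  obtain ⟨k, C, hC0, hC⟩ := hf.norm_iteratedFDeriv_le_uniform 0
  have hfC (x : E) : ‖f x‖ ≤ C * (1 + ‖x‖) ^ k := by simpa using hC 0 le_rfl x
  obtain ⟨D, hD⟩ := exists_one_add_pow_mul_exp_neg_mul_sq_le hc (k + μ.integrablePower)
  refine (μ.integrable_pow_neg_integrablePower.const_mul (C * D)).mono'
    (hf.1.continuous.mul (by fun_prop)).aestronglyMeasurable (.of_forall fun x => ?_)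
  have hx : 0 < (1 + ‖x‖) ^ μ.integrablePower := by positivity
  rw [rpow_neg (by positivity), rpow_natCast, ← div_eq_mul_inv, le_div_iff₀ hx, norm_mul,
    norm_of_nonneg (exp_pos _).le]
  calc ‖f x‖ * exp (-Q x) * (1 + ‖x‖) ^ μ.integrablePower
      ≤ C * (1 + ‖x‖) ^ k * exp (-(c * ‖x‖ ^ 2)) * (1 + ‖x‖) ^ μ.integrablePower := by
        gcongr
        exacts [hfC x, hcQ x]
    _ = C * ((1 + ‖x‖) ^ (k + μ.integrablePower) * exp (-(c * ‖x‖ ^ 2))) := by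
        rw [pow_add]; ring
    _ ≤ C * D := by gcongr; exact hD _ (norm_nonneg x)

lemma integral_mul_fderiv_mul_exp_neg [FiniteDimensional ℝ E] {μ : Measure E} [μ.IsAddHaarMeasure]
    {f Q : E → ℝ} (hf : f.HasTemperateGrowth) (hQ : Q.HasTemperateGrowth) {c : ℝ} (hc : 0 < c)
    (hcQ : ∀ x, c * ‖x‖ ^ 2 ≤ Q x) (v : E) :
    ∫ x, f x * fderiv ℝ Q x v * exp (-Q x) ∂μ = ∫ x, fderiv ℝ f x v * exp (-Q x) ∂μ := by
  have hQdiff : Differentiable ℝ Q := hQ.1.differentiable (by simp)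
  have hexp (x : E) : fderiv ℝ (fun y => exp (-Q y)) x v = -(fderiv ℝ Q x v * exp (-Q x)) := by
    rw [(hQdiff x).hasFDerivAt.fun_neg.exp.fderiv]
    simp [mul_comm]
  have hint {g : E → ℝ} (hg : g.HasTemperateGrowth) : Integrable (fun x => g x * exp (-Q x)) μ :=
    integrable_mul_exp_neg hg hQ.1.continuous hc hcQ
  have hparts := integral_mul_fderiv_eq_neg_fderiv_mul_of_integrable (μ := μ) (v := v) (f := f)
    (g := fun y => exp (-Q y)) (hint (hasTemperateGrowth_fderiv_apply hf v))
    (by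
      simpa only [hexp, mul_neg, mul_assoc] using
        (hint (hf.fun_mul (hasTemperateGrowth_fderiv_apply hQ v))).fun_neg)
    (hint hf) (fun x _ => hf.1.differentiable (by simp) x) (fun x _ => by fun_prop)
  simpa only [hexp, mul_neg, ← mul_assoc, integral_neg, neg_inj] using hparts

lemma integral_sum_mul_fderiv_mul_exp_neg [FiniteDimensional ℝ E] {μ : Measure E}
    [μ.IsAddHaarMeasure] {κ : Type*} [Fintype κ] {X : κ → E → ℝ} {Q : E → ℝ}
    (hX : ∀ j, (X j).HasTemperateGrowth) (hQ : Q.HasTemperateGrowth) {c : ℝ} (hc : 0 < c)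
    (hcQ : ∀ x, c * ‖x‖ ^ 2 ≤ Q x) (v : κ → E) :
    ∫ x, (∑ j, fderiv ℝ Q x (v j) * X j x) * exp (-Q x) ∂μ =
      ∫ x, (∑ j, fderiv ℝ (X j) x (v j)) * exp (-Q x) ∂μ := by
  have hint {g : E → ℝ} (hg : g.HasTemperateGrowth) : Integrable (fun x => g x * exp (-Q x)) μ :=
    integrable_mul_exp_neg hg hQ.1.continuous hc hcQ
  simp only [Finset.sum_mul]
  rw [integral_finsetSum _ fun j _ =>
      hint ((hasTemperateGrowth_fderiv_apply hQ (v j)).fun_mul (hX j)),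
    integral_finsetSum _ fun j _ => hint (hasTemperateGrowth_fderiv_apply (hX j) (v j))]
  refine Finset.sum_congr rfl fun j _ => ?_
  simpa only [mul_comm (X j _)] using integral_mul_fderiv_mul_exp_neg (hX j) hQ hc hcQ (v j)

end GaussianDecay

section QuadraticForm

variable {E F : Type*} [NormedAddCommGroup E] [NormedSpace ℝ E] [FiniteDimensional ℝ E]

lemma hasTemperateGrowth_norm_map_sq [NormedAddCommGroup F] [InnerProductSpace ℝ F]
    (L : E →ₗ[ℝ] F) : (fun y => ‖L y‖ ^ 2).HasTemperateGrowth :=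
  (Function.hasTemperateGrowth_norm_sq F).comp L.toContinuousLinearMap.hasTemperateGrowth

lemma exists_mul_norm_sq_le_norm_map_sq [NormedAddCommGroup F] [NormedSpace ℝ F]
    {L : E →ₗ[ℝ] F} (hL : Function.Injective L) :
    ∃ c > 0, ∀ y, c * ‖y‖ ^ 2 ≤ ‖L y‖ ^ 2 := by
  obtain ⟨K, hK, hLK⟩ := L.exists_antilipschitzWith (LinearMap.ker_eq_bot.2 hL)
  refine ⟨((K : ℝ) ^ 2)⁻¹, by positivity, fun y => ?_⟩
  rw [inv_mul_le_iff₀ (by positivity), ← mul_pow]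
  gcongr
  exact ZeroHomClass.bound_of_antilipschitz L hLK y

end QuadraticForm

section LocalIndex

variable {ι : Type*} [Fintype ι] [DecidableEq ι]

lemma hasTemperateGrowth_jacobian {f : ι → EuclideanSpace ℝ ι → ℝ}
    (hf : ∀ i, (f i).HasTemperateGrowth) (i j : ι) :
    (fun x => jacobian f x i j).HasTemperateGrowth :=
  hasTemperateGrowth_fderiv_apply (hf i) _

lemma continuous_jacobian {f : ι → EuclideanSpace ℝ ι → ℝ} (hf : ∀ i, ContDiff ℝ 1 (f i)) :
    Continuous (jacobian f) :=
  continuous_matrix fun i _ => ((hf i).continuous_fderiv one_ne_zero).clm_apply continuous_const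

lemma mul_det_jacobian_eq_sum_fderiv_mul_adjugate {f : ι → EuclideanSpace ℝ ι → ℝ}
    {y : EuclideanSpace ℝ ι} (hf : ∀ i, DifferentiableAt ℝ (f i) y) (w : ι → ℝ) (k : ι) :
    w k * (jacobian f y).det = ∑ j, fderiv ℝ (fun y => ∑ i, w i * f i y) y
      (EuclideanSpace.single j 1) * (jacobian f y).adjugate j k := by
  rw [← smul_eq_mul, ← Matrix.det_updateRow_sum, det_updateRow_eq_sum_mul_adjugate]
  refine Finset.sum_congr rfl fun j _ => ?_
  rw [fderiv_fun_sum fun i _ => (hf i).const_mul (w i)]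
  simp [fderiv_const_mul, hf, jacobian]

lemma integral_det_jacobian_mul_exp_neg_eq_zero [Nonempty ι] {f : ι → EuclideanSpace ℝ ι → ℝ}
    (hf : ∀ i, (f i).HasTemperateGrowth) {w : ι → ℝ} {c : ℝ} (hc : 0 < c)
    (hw : ∀ y, c * ‖y‖ ^ 2 ≤ ∑ i, w i * f i y) :
    ∫ y, (jacobian f y).det * exp (-∑ i, w i * f i y) = 0 := by
  obtain ⟨k, hk⟩ : ∃ k, w k ≠ 0 := by
    by_contra! hzero
    have hc_nonpos : c ≤ 0 := by
      simpa [hzero] using hw (EuclideanSpace.single (Classical.arbitrary ι) 1)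
    exact hc.not_ge hc_nonpos
  have hQ : (fun y => ∑ i, w i * f i y).HasTemperateGrowth :=
    .sum fun i _ => (Function.HasTemperateGrowth.const (w i)).fun_mul (hf i)
  have hadj (j : ι) : (fun y => (jacobian f y).adjugate j k).HasTemperateGrowth :=
    hasTemperateGrowth_adjugate (hasTemperateGrowth_jacobian hf) j k
  have hpiola (y) := sum_fderiv_adjugate_jacobian_eq_zero (x := y)
    (fun i => (hf i).1.contDiffAt.of_le ENat.LEInfty.out) k
  refine (mul_eq_zero_iff_left hk).1 ?_
  calc w k * ∫ y, (jacobian f y).det * exp (-∑ i, w i * f i y)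
      = ∫ y, (∑ j, fderiv ℝ (fun y => ∑ i, w i * f i y) y (EuclideanSpace.single j 1) *
          (jacobian f y).adjugate j k) * exp (-∑ i, w i * f i y) := by
        simp only [← integral_const_mul, ← mul_assoc, mul_det_jacobian_eq_sum_fderiv_mul_adjugate
          fun i => (hf i).1.differentiable (by simp) _]
    _ = ∫ y, (∑ j, fderiv ℝ (fun y => (jacobian f y).adjugate j k) y
          (EuclideanSpace.single j 1)) * exp (-∑ i, w i * f i y) :=
        integral_sum_mul_fderiv_mul_exp_neg hadj hQ hc hw _
    _ = 0 := by simp only [hpiola, zero_mul, integral_zero]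

/-- The density of the form under the integral sign in the definition (0.1) of the local index
`ν_p`, at the point `z = (x, y)` of the trivialised bundle; `q` stands for `h_{α_1}`. The wedge
product of the `dρ i ∧ dh i` is encoded as a block determinant. -/
noncomputable def localIndexIntegrand (φ : EuclideanSpace ℝ ι → ℝ)
    (ρ h : ι → EuclideanSpace ℝ ι → ℝ) (q : EuclideanSpace ℝ ι → ℝ) (β : ι → ℝ) (α T : ℝ)
    (z : EuclideanSpace ℝ ι × EuclideanSpace ℝ ι) : ℝ :=
  φ z.1 * (∏ i, T ^ β i / (4 * π)) *
    (Matrix.fromBlocks (jacobian ρ z.1) 0 0 (jacobian h z.2)).det *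
    exp (-(∑ i, ρ i z.1 * T ^ β i * h i z.2) - T ^ α * q z.2)

variable {φ : EuclideanSpace ℝ ι → ℝ} {ρ h : ι → EuclideanSpace ℝ ι → ℝ}
  {q : EuclideanSpace ℝ ι → ℝ} {β a : ι → ℝ} {α c T : ℝ}

lemma integrable_localIndexIntegrand (hφ : Continuous φ) (hφsupp : HasCompactSupport φ)
    (hρ : ∀ i, ContDiff ℝ 1 (ρ i)) (hρ0 : ∀ i x, 0 ≤ ρ i x)
    (hh : ∀ i, (h i).HasTemperateGrowth) (hh0 : ∀ i y, 0 ≤ h i y) (hq : Continuous q)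
    (hc : 0 < c) (hcq : ∀ y, c * ‖y‖ ^ 2 ≤ q y) (hT : 0 < T) :
    Integrable (localIndexIntegrand φ ρ h q β α T) := by
  have hρdet : Continuous fun x => (jacobian ρ x).det := (continuous_jacobian hρ).matrix_det
  have hhdet : (fun y => (jacobian h y).det).HasTemperateGrowth :=
    hasTemperateGrowth_det (hasTemperateGrowth_jacobian hh)
  have hbase : Integrable fun x => φ x * ((∏ i, T ^ β i / (4 * π)) * (jacobian ρ x).det) :=
    (hφ.mul (hρdet.const_mul _)).integrable_of_hasCompactSupport hφsupp.mul_right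
  have hfibre : Integrable fun y => (jacobian h y).det * exp (-(T ^ α * q y)) :=
    integrable_mul_exp_neg hhdet (hq.const_mul _) (c := T ^ α * c) (by positivity) fun y => by
      rw [mul_assoc]
      gcongr
      exact hcq y
  refine (hbase.mul_prod hfibre).mono ?_ (.of_forall fun ⟨x, y⟩ => ?_)
  · have := continuous_jacobian hρ
    have := continuous_jacobian fun i => (hh i).1.of_le (by simp)
    have (i : ι) := (hρ i).continuous
    have (i : ι) := (hh i).1.continuous
    unfold localIndexIntegrand
    simp only [Matrix.det_fromBlocks_zero₂₁]
    exact Continuous.aestronglyMeasurable (by fun_prop)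
  · have hexp : exp (-(∑ i, ρ i x * T ^ β i * h i y) - T ^ α * q y) ≤ exp (-(T ^ α * q y)) := by
      have : 0 ≤ ∑ i, ρ i x * T ^ β i * h i y := Finset.sum_nonneg fun i _ =>
        mul_nonneg (mul_nonneg (hρ0 i x) (by positivity)) (hh0 i y)
      gcongr
      linarith
    simp only [localIndexIntegrand, Matrix.det_fromBlocks_zero₂₁, norm_mul,
      norm_of_nonneg (exp_nonneg _), ← mul_assoc]
    gcongr

theorem stmt_18_general [Nonempty ι] (hφ : Continuous φ) (hφsupp : HasCompactSupport φ)
    (hρ : ∀ i, ContDiff ℝ 1 (ρ i)) (hρ0 : ∀ i x, 0 ≤ ρ i x)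
    (hh : ∀ i, (h i).HasTemperateGrowth) (hh0 : ∀ i y, 0 ≤ h i y)
    (hc : 0 < c) (hcq : ∀ y, c * ‖y‖ ^ 2 ≤ q y) (hrel : ∀ y, ∑ i, a i * h i y = q y)
    (hT : 0 < T) :
    Integrable (localIndexIntegrand φ ρ h q β α T) ∧
      ∫ z, localIndexIntegrand φ ρ h q β α T z = 0 := by
  have hq : Continuous q := by
    have (i : ι) := (hh i).1.continuous
    rw [← funext hrel]
    fun_prop
  have hint : Integrable (localIndexIntegrand φ ρ h q β α T) :=
    integrable_localIndexIntegrand hφ hφsupp hρ hρ0 hh hh0 hq hc hcq hT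
  refine ⟨hint, ?_⟩
  rw [Measure.volume_eq_prod] at hint ⊢
  rw [integral_prod _ hint]
  refine integral_eq_zero_of_ae (.of_forall fun x => ?_)
  let w (i : ι) : ℝ := ρ i x * T ^ β i + T ^ α * a i
  have hw (y) : ∑ i, w i * h i y = ∑ i, ρ i x * T ^ β i * h i y + T ^ α * q y := by
    simp only [w, add_mul, Finset.sum_add_distrib, ← hrel, Finset.mul_sum, mul_assoc]
  have hcw (y) : T ^ α * c * ‖y‖ ^ 2 ≤ ∑ i, w i * h i y := by
    have hsum : 0 ≤ ∑ i, ρ i x * T ^ β i * h i y := Finset.sum_nonneg fun i _ =>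
      mul_nonneg (mul_nonneg (hρ0 i x) (by positivity)) (hh0 i y)
    have : T ^ α * (c * ‖y‖ ^ 2) ≤ T ^ α * q y := by gcongr; exact hcq y
    rw [hw, mul_assoc]
    linarith
  calc ∫ y, localIndexIntegrand φ ρ h q β α T (x, y)
      = ∫ y, φ x * (∏ i, T ^ β i / (4 * π)) * (jacobian ρ x).det *
          ((jacobian h y).det * exp (-∑ i, w i * h i y)) := by
        simp only [localIndexIntegrand, Matrix.det_fromBlocks_zero₂₁, hw, neg_add', mul_assoc]
    _ = 0 := by
        rw [integral_const_mul, integral_det_jacobian_mul_exp_neg_eq_zero hh (by positivity) hcw,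
          mul_zero]

end LocalIndex

/-- Remark after Proposition 0.1: in the local model around a point `p ∈ B₊`, with
fiberwise quadratic forms `h_{β_i}(y) = ‖L_i y‖²` (the flat coordinates of the
chart `U_{β_i}`) and `h_{α_1}(y) = ‖L₀ y‖²`, if there are constants `a_i` with
`Σᵢ a_i h_{β_i} = h_{α_1}` on the fiber, then the local index
`ν_p = lim_{T→∞} ∫_F φ Π_i (dρ_{β_i} T^{β_i}/(4π) ∧ dh_{β_i})
  exp(-Σᵢ ρ_{β_i} T^{β_i} h_{β_i} - T^{α_1} h_{α_1})`
vanishes.  The `4n`-form is evaluated against the standard orientation as the block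
determinant of the horizontal differentials `dρ_{β_i}` and the vertical
differentials `dh_{β_i}`. -/
theorem stmt_18 (n : ℕ) (hn : 1 ≤ n)
    (β : Fin (2 * n) → ℝ) (α : ℝ) (hβmono : StrictAnti β) (hβα : ∀ i, α < β i)
    (p : EuclideanSpace ℝ (Fin (2 * n)))
    (ρ : Fin (2 * n) → EuclideanSpace ℝ (Fin (2 * n)) → ℝ)
    (hρsmooth : ∀ i, ContDiff ℝ (⊤ : ℕ∞) (ρ i))
    (hρrange : ∀ i x, 0 ≤ ρ i x ∧ ρ i x ≤ 1)
    (L : Fin (2 * n) →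
      (EuclideanSpace ℝ (Fin (2 * n)) ≃ₗ[ℝ] EuclideanSpace ℝ (Fin (2 * n))))
    (L₀ : EuclideanSpace ℝ (Fin (2 * n)) ≃ₗ[ℝ] EuclideanSpace ℝ (Fin (2 * n)))
    (h : Fin (2 * n) → EuclideanSpace ℝ (Fin (2 * n)) → ℝ)
    (hα₁ : EuclideanSpace ℝ (Fin (2 * n)) → ℝ)
    (hh : ∀ i y, h i y = ‖L i y‖ ^ 2) (hhα : ∀ y, hα₁ y = ‖L₀ y‖ ^ 2)
    (a : Fin (2 * n) → ℝ)
    (hrel : ∀ y, ∑ i, a i * h i y = hα₁ y)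
    (φ : EuclideanSpace ℝ (Fin (2 * n)) → ℝ)
    (hφsmooth : ContDiff ℝ (⊤ : ℕ∞) φ) (hφsupp : HasCompactSupport φ)
    (hφ1 : ∀ᶠ x in nhds p, φ x = 1) :
    Tendsto (fun T : ℝ =>
        ∫ z : EuclideanSpace ℝ (Fin (2 * n)) × EuclideanSpace ℝ (Fin (2 * n)),
          φ z.1 * (∏ i, T ^ β i / (4 * π)) *
            (Matrix.fromBlocks
              (Matrix.of fun i j : Fin (2 * n) =>
                fderiv ℝ (ρ i) z.1 (EuclideanSpace.single j 1))
              0 0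
              (Matrix.of fun i j : Fin (2 * n) =>
                fderiv ℝ (h i) z.2 (EuclideanSpace.single j 1))).det *
            Real.exp (-(∑ i, ρ i z.1 * T ^ β i * h i z.2) - T ^ α * hα₁ z.2))
      atTop (nhds 0) := by
  have : Nonempty (Fin (2 * n)) := ⟨⟨0, by omega⟩⟩
  have hh_growth (i) : (h i).HasTemperateGrowth :=
    funext (hh i) ▸ hasTemperateGrowth_norm_map_sq (L i).toLinearMap
  obtain ⟨c, hc, hcL₀⟩ := exists_mul_norm_sq_le_norm_map_sq (L := L₀.toLinearMap) L₀.injective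
  refine tendsto_const_nhds.congr' ((eventually_gt_atTop 0).mono fun T hT => ?_)
  exact (stmt_18_general hφsmooth.continuous hφsupp (fun i => (hρsmooth i).of_le (by simp))
    (fun i x => (hρrange i x).1) hh_growth (fun i y => hh i y ▸ sq_nonneg _) hc
    (fun y => hhα y ▸ hcL₀ y) hrel hT).2.symm
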